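/- Let G be a finite group, X a finite G-set with permutation representation ℝ^X, and x ∈ X with stabilizer G_x. Let V_0, …, V_d be permutation representations of G with V_d = ℝ^X, and M_i ⊆ Aff_G(V_{i-1}, V_i) layer spaces for i = 1, …, d. Let M ⊆ Aff_G(ℝ^X, ℝ^X) be a layer space containing the identity map, let P := { π_x ∘ f : f ∈ M } ⊆ Aff_{G_x}(ℝ^X, ℝ) be the pushforward layer space, and let L := Aff(ℝ, ℝ). Assume σ : ℝ → ℝ is continuous and not a polynomial, and set ρ = ρ(U(M_1, …, M_d, P)). Then U(M_1, …, M_d, P, L) = C_ρ(V_0, ℝ). -/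

import Mathlib

open scoped BigOperators

noncomputable section EquivUnivPreamble

/-- Point-wise activation: apply `σ` coordinatewise. -/
def act (σ : ℝ → ℝ) {Z : Type} (v : Z → ℝ) : Z → ℝ := fun z => σ (v z)

/-- The action of a group element `g` on a real-valued function `v : Y → ℝ` induced by a
`G`-action on `Y` (the permutation representation `ℝ^Y`): `(g • v) y = v (g⁻¹ • y)`. -/
def pSMul {G Y : Type} [Group G] [MulAction G Y] (g : G) (v : Y → ℝ) : Y → ℝ :=
  fun y => v (g⁻¹ • y)

/-- `G`-equivariance of a map between permutation representations. -/
def Equivariant (G : Type) [Group G] {Y Z : Type} [MulAction G Y] [MulAction G Z]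
    (f : (Y → ℝ) → (Z → ℝ)) : Prop :=
  ∀ (g : G) (v : Y → ℝ), f (pSMul g v) = pSMul g (f v)

/-- A map between permutation representations is affine. -/
def IsAffine {Y Z : Type} (f : (Y → ℝ) → (Z → ℝ)) : Prop :=
  ∃ (φ : (Y → ℝ) →ₗ[ℝ] (Z → ℝ)) (b : Z → ℝ), ∀ v, f v = φ v + b

/-- A layer space: the set of maps `v ↦ ∑ᵢ cᵢ φⁱ(v) + b` where `φ¹, …, φᵏ` are fixed
`G`-equivariant linear maps and the bias `b` ranges over all functions constant on
`G`-orbits (i.e. all `∑ⱼ yⱼ 1_{Xⱼ}` with `Xⱼ` the orbits). -/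
def IsLayerSpace (G : Type) [Group G] {Y Z : Type} [MulAction G Y] [MulAction G Z]
    (M : Set ((Y → ℝ) → (Z → ℝ))) : Prop :=
  ∃ (k : ℕ) (φ : Fin k → ((Y → ℝ) →ₗ[ℝ] (Z → ℝ))),
    (∀ i, Equivariant G (φ i : (Y → ℝ) → (Z → ℝ))) ∧
    M = { f | ∃ (c : Fin k → ℝ) (b : Z → ℝ),
            (∀ (g : G) (z : Z), b (g • z) = b z) ∧
            ∀ v, f v = (∑ i, c i • φ i v) + b }

/-- `M^{k×h}`: the layer space `M` with input multiplicity `k` and output multiplicity `h`,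
`(v₁,…,v_k) ↦ (∑ⱼ f_{1,j}(vⱼ), …, ∑ⱼ f_{h,j}(vⱼ))`, identifying `V ⊗ ℝᵏ` with
`Fin k × Y → ℝ`. -/
def layerPow {Y Z : Type} (M : Set ((Y → ℝ) → (Z → ℝ))) (k h : ℕ) :
    Set ((Fin k × Y → ℝ) → (Fin h × Z → ℝ)) :=
  { F | ∃ f : Fin h → Fin k → ((Y → ℝ) → (Z → ℝ)),
      (∀ i j, f i j ∈ M) ∧
      ∀ (v : Fin k × Y → ℝ) (p : Fin h × Z), F v p = ∑ j, f p.1 j (fun y => v (j, y)) p.2 }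

/-- `M^{1×h}` under the canonical identification `V ⊗ ℝ¹ ≅ V` of the input. -/
def layerPowIn {Y Z : Type} (M : Set ((Y → ℝ) → (Z → ℝ))) (h : ℕ) :
    Set ((Y → ℝ) → (Fin h × Z → ℝ)) :=
  { F | ∃ f : Fin h → ((Y → ℝ) → (Z → ℝ)), (∀ i, f i ∈ M) ∧
      ∀ (v : Y → ℝ) (p : Fin h × Z), F v p = f p.1 v p.2 }

/-- `M^{k×1}` under the canonical identification `W ⊗ ℝ¹ ≅ W` of the output. -/
def layerPowOut {Y Z : Type} (M : Set ((Y → ℝ) → (Z → ℝ))) (k : ℕ) :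
    Set ((Fin k × Y → ℝ) → (Z → ℝ)) :=
  { F | ∃ f : Fin k → ((Y → ℝ) → (Z → ℝ)), (∀ j, f j ∈ M) ∧
      ∀ (v : Fin k × Y → ℝ) (z : Z), F v z = ∑ j, f j (fun y => v (j, y)) z }

/-- Evaluation of a chain of `d+1` layers with the point-wise activation `σ` between
consecutive layers: `φ_d ∘ σ̃ ∘ ⋯ ∘ σ̃ ∘ φ_0`. -/
def chainEval (σ : ℝ → ℝ) : ∀ (d : ℕ) (Y : Fin (d + 2) → Type)
    (φ : ∀ i : Fin (d + 1), (Y i.castSucc → ℝ) → (Y i.succ → ℝ)),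
    (Y 0 → ℝ) → (Y (Fin.last (d + 1)) → ℝ)
  | 0, _, φ => φ 0
  | (d + 1), Y, φ => fun v =>
      φ (Fin.last (d + 1))
        (act σ (chainEval σ d (fun i : Fin (d + 2) => Y i.castSucc)
          (fun i : Fin (d + 1) => φ i.castSucc) v))

/-- The neural space `N(M₀, …, M_d)` of a chain of `d+1` layer spaces. -/
def NeuralSpace (σ : ℝ → ℝ) (d : ℕ) (Y : Fin (d + 2) → Type)
    (M : ∀ i : Fin (d + 1), Set ((Y i.castSucc → ℝ) → (Y i.succ → ℝ))) :
    Set ((Y 0 → ℝ) → (Y (Fin.last (d + 1)) → ℝ)) :=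
  { F | ∃ φ : ∀ i : Fin (d + 1), (Y i.castSucc → ℝ) → (Y i.succ → ℝ),
      (∀ i, φ i ∈ M i) ∧ F = chainEval σ d Y φ }

/-- All networks `N(M₀^{1×k₁}, M₁^{k₁×k₂}, …, M_d^{k_d×k})` for the chain `M₀,…,M_d`, with
arbitrary interior multiplicities and fixed output multiplicity `k` (union over the interior
multiplicities). -/
def WPre (σ : ℝ → ℝ) : ∀ (d : ℕ) (Y : Fin (d + 2) → Type)
    (M : ∀ i : Fin (d + 1), Set ((Y i.castSucc → ℝ) → (Y i.succ → ℝ))) (k : ℕ),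
    Set ((Y 0 → ℝ) → (Fin k × Y (Fin.last (d + 1)) → ℝ))
  | 0, _, M, k => layerPowIn (M 0) k
  | (d + 1), Y, M, k =>
      { F | ∃ (k' : ℕ) (g : (Y 0 → ℝ) → (Fin k' × Y (Fin.last (d + 1)).castSucc → ℝ)),
          g ∈ WPre σ d (fun i : Fin (d + 2) => Y i.castSucc)
                (fun i : Fin (d + 1) => M i.castSucc) k' ∧
          ∃ f ∈ layerPow (M (Fin.last (d + 1))) k' k,
          F = fun v => f (act σ (g v)) }

/-- The network space `N(M₀^{1×k}, M₁^{k×k}, …, M_d^{k×k})`: all multiplicities equal to `k`. -/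
def WFix (σ : ℝ → ℝ) : ∀ (d : ℕ) (Y : Fin (d + 2) → Type)
    (M : ∀ i : Fin (d + 1), Set ((Y i.castSucc → ℝ) → (Y i.succ → ℝ))) (k : ℕ),
    Set ((Y 0 → ℝ) → (Fin k × Y (Fin.last (d + 1)) → ℝ))
  | 0, _, M, k => layerPowIn (M 0) k
  | (d + 1), Y, M, k =>
      { F | ∃ g ∈ WFix σ d (fun i : Fin (d + 2) => Y i.castSucc)
                (fun i : Fin (d + 1) => M i.castSucc) k,
          ∃ f ∈ layerPow (M (Fin.last (d + 1))) k k,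
          F = fun v => f (act σ (g v)) }

/-- Closure in the topology of uniform convergence on compact sets. -/
def UnifClosure {A B : Type} [TopologicalSpace A] [PseudoMetricSpace B]
    (S : Set (A → B)) : Set (A → B) :=
  { F | ∀ K : Set A, IsCompact K → ∀ ε : ℝ, 0 < ε → ∃ g ∈ S, ∀ x ∈ K, dist (F x) (g x) < ε }

/-- Separation relation of a family of functions. -/
def sepRel {A B : Type} (S : Set (A → B)) : Set (A × A) :=
  { p | ∀ f ∈ S, f p.1 = f p.2 }

/-- Entry-wise separation relation at the output entry `z`. -/
def sepRelAt {A Z : Type} (S : Set (A → (Z → ℝ))) (z : Z) : Set (A × A) :=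
  { p | ∀ f ∈ S, f p.1 z = f p.2 z }

/-- `C_ρ(A, B)`: continuous functions respecting the relation `ρ`. -/
def Crho {A B : Type} [TopologicalSpace A] [TopologicalSpace B] (ρ : Set (A × A)) :
    Set (A → B) :=
  { f | Continuous f ∧ ∀ p ∈ ρ, f p.1 = f p.2 }

/-- `C_ρ̄(A, ℝ^Z)` for a family of entry-wise relations `ρ̄ = (ρ_z)_{z ∈ Z}`. -/
def CrhoEntryRel {A Z : Type} [TopologicalSpace A] (ρ : Z → Set (A × A)) :
    Set (A → (Z → ℝ)) :=
  { f | Continuous f ∧ ∀ (z : Z), ∀ p ∈ ρ z, f p.1 z = f p.2 z }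

/-- `σ` is not a polynomial function. -/
def NotPolynomial (σ : ℝ → ℝ) : Prop :=
  ¬ ∃ p : Polynomial ℝ, ∀ x : ℝ, σ x = Polynomial.eval x p

/-- `c+1` widened copies of the layer space `M ⊆ Aff_G(ℝ^Z, ℝ^Z)`, from input multiplicity
`kin` to output multiplicity `kout` (union over interior multiplicities). -/
def WRep (σ : ℝ → ℝ) {Z : Type} (M : Set ((Z → ℝ) → (Z → ℝ))) :
    ∀ (_c kin kout : ℕ), Set ((Fin kin × Z → ℝ) → (Fin kout × Z → ℝ))
  | 0, kin, kout => layerPow M kin kout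
  | (c + 1), kin, kout =>
      { F | ∃ k, ∃ g ∈ WRep σ M c kin k, ∃ f ∈ layerPow M k kout,
          F = fun v => f (act σ (g v)) }

/-- `c+1` widened copies of `M`, starting at input multiplicity `kin` and ending with
output multiplicity `1` (canonically identified with `ℝ^Z`). -/
def WRepOut (σ : ℝ → ℝ) {Z : Type} (M : Set ((Z → ℝ) → (Z → ℝ))) :
    ∀ (_c kin : ℕ), Set ((Fin kin × Z → ℝ) → (Z → ℝ))
  | 0, kin => layerPowOut M kin
  | (c + 1), kin =>
      { F | ∃ k, ∃ g ∈ WRep σ M c kin k, ∃ f ∈ layerPowOut M k,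
          F = fun v => f (act σ (g v)) }

/-- `c+1` widened copies of `M`, with input multiplicity `1` (identified with `ℝ^Z`) and
output multiplicity `k`. -/
def WRepIn (σ : ℝ → ℝ) {Z : Type} (M : Set ((Z → ℝ) → (Z → ℝ))) :
    ∀ (_c k : ℕ), Set ((Z → ℝ) → (Fin k × Z → ℝ))
  | 0, k => layerPowIn M k
  | (c + 1), k =>
      { F | ∃ k', ∃ g ∈ WRepIn σ M c k', ∃ f ∈ layerPow M k' k,
          F = fun v => f (act σ (g v)) }

/-- The universality class `U(M, …, M)` of `c+2` copies of a layer space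
`M ⊆ Aff_G(ℝ^Z, ℝ^Z)`. -/
def UClassRep (σ : ℝ → ℝ) {Z : Type} [Fintype Z] (M : Set ((Z → ℝ) → (Z → ℝ))) (c : ℕ) :
    Set ((Z → ℝ) → (Z → ℝ)) :=
  UnifClosure { F | ∃ k, ∃ g ∈ WRepIn σ M c k, ∃ f ∈ layerPowOut M k,
      F = fun v => f (act σ (g v)) }

/-- The universality class `U(M₀, …, M_d, M, …, M)` of the chain `M₀, …, M_d` followed by
`c+1` copies of `M`. -/
def UClassPreRep (σ : ℝ → ℝ) (d : ℕ) (Y : Fin (d + 2) → Type)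
    [Fintype (Y (Fin.last (d + 1)))]
    (Mpre : ∀ i : Fin (d + 1), Set ((Y i.castSucc → ℝ) → (Y i.succ → ℝ)))
    (M : Set ((Y (Fin.last (d + 1)) → ℝ) → (Y (Fin.last (d + 1)) → ℝ))) (c : ℕ) :
    Set ((Y 0 → ℝ) → (Y (Fin.last (d + 1)) → ℝ)) :=
  UnifClosure { F | ∃ k, ∃ g ∈ WPre σ d Y Mpre k, ∃ f ∈ WRepOut σ M c k,
      F = fun v => f (act σ (g v)) }

/-- The universality class `U(M₀, …, M_d, N)` of the chain `M₀, …, M_d` followed by one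
extra layer space `N`. -/
def UClassApp1 (σ : ℝ → ℝ) (d : ℕ) (Y : Fin (d + 2) → Type)
    (M : ∀ i : Fin (d + 1), Set ((Y i.castSucc → ℝ) → (Y i.succ → ℝ)))
    {Z : Type} [Fintype Z]
    (N : Set ((Y (Fin.last (d + 1)) → ℝ) → (Z → ℝ))) : Set ((Y 0 → ℝ) → (Z → ℝ)) :=
  UnifClosure { F | ∃ k, ∃ g ∈ WPre σ d Y M k, ∃ f ∈ layerPowOut N k,
      F = fun v => f (act σ (g v)) }

/-- The universality class `U(M₀, …, M_d, N₁, N₂)` of the chain `M₀, …, M_d` followed by two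
extra layer spaces `N₁, N₂`. -/
def UClassApp2 (σ : ℝ → ℝ) (d : ℕ) (Y : Fin (d + 2) → Type)
    (M : ∀ i : Fin (d + 1), Set ((Y i.castSucc → ℝ) → (Y i.succ → ℝ)))
    {Z₁ Z₂ : Type} [Fintype Z₂]
    (N₁ : Set ((Y (Fin.last (d + 1)) → ℝ) → (Z₁ → ℝ)))
    (N₂ : Set ((Z₁ → ℝ) → (Z₂ → ℝ))) : Set ((Y 0 → ℝ) → (Z₂ → ℝ)) :=
  UnifClosure { F | ∃ k₁, ∃ g ∈ WPre σ d Y M k₁, ∃ k₂, ∃ m ∈ layerPow N₁ k₁ k₂,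
      ∃ f ∈ layerPowOut N₂ k₂, F = fun v => f (act σ (m (act σ (g v)))) }

/-- The universality class `U(M₁, M₂, M₃)` of three layer spaces on a common space `ℝ^Z`. -/
def UClass3 (σ : ℝ → ℝ) {Z : Type} [Fintype Z] (M₁ M₂ M₃ : Set ((Z → ℝ) → (Z → ℝ))) :
    Set ((Z → ℝ) → (Z → ℝ)) :=
  UnifClosure { F | ∃ k₁ k₂, ∃ g ∈ layerPowIn M₁ k₁, ∃ m ∈ layerPow M₂ k₁ k₂,
      ∃ f ∈ layerPowOut M₃ k₂, F = fun v => f (act σ (m (act σ (g v)))) }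

/-- The invariant layer space `I = Aff_G(ℝ^Y, ℝ)`: all `G`-invariant affine maps, with `ℝ`
realized as the trivial permutation representation `ℝ^{Unit}`. -/
def InvAff (G : Type) [Group G] {Y : Type} [MulAction G Y] :
    Set ((Y → ℝ) → (Unit → ℝ)) :=
  { f | IsAffine f ∧ ∀ (g : G) (v : Y → ℝ), f (pSMul g v) = f v }

/-- The fully connected layer space `L = Aff(ℝ, ℝ)`, with `ℝ` realized as `ℝ^{Unit}`. -/
def Lfull : Set ((Unit → ℝ) → (Unit → ℝ)) :=
  { f | ∃ a b : ℝ, f = fun v _ => a * v () + b }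

/-- The width-1 convolutional layer space `C ⊆ Aff_G(ℝ^X, ℝ^X)`:
`v ↦ a·v + (bias constant on `G`-orbits)`, i.e. `v ↦ a·v + ∑ⱼ yⱼ 1_{Xⱼ}`. -/
def ConvG (G : Type) [Group G] {X : Type} [MulAction G X] : Set ((X → ℝ) → (X → ℝ)) :=
  { f | ∃ (a : ℝ) (b : X → ℝ), (∀ (g : G) (z : X), b (g • z) = b z) ∧
      f = fun v z => a * v z + b z }

/-- The width-1 convolutional layer space for `S_n` acting on `ℝ^n`:
`C = { v ↦ a·v + b𝟙 }`. -/
def ConvC (n : ℕ) : Set ((Fin n → ℝ) → (Fin n → ℝ)) :=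
  { f | ∃ a b : ℝ, f = fun v i => a * v i + b }

/-- The PointNet (DeepSets) layer space for `S_n` acting on `ℝ^n`:
`P = { v ↦ (a·Id + c·𝟙𝟙ᵀ) v + b𝟙 }`. -/
def PointNetP (n : ℕ) : Set ((Fin n → ℝ) → (Fin n → ℝ)) :=
  { f | ∃ a c b : ℝ, f = fun v i => a * v i + c * (∑ j, v j) + b }
end EquivUnivPreamble

/-!
The functions in `N(M₀, …, M_d, P)` form a linear space `S` containing the constants, and up to
closure `U(M₀, …, M_d, P, L)` is the span of `{σ ∘ f : f ∈ S}`. For a closed linear space of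
functions stable under affine reparametrisation, containing a non-polynomial function forces it
to be everything (Leshno–Lin–Pinkus–Schocken): mollify, then differentiate `τ (a x + b)` at
`a = 0` to produce all monomials. Applied to `{τ : τ ∘ f lies in the closure for all f ∈ S}`, this
allows `σ` to be replaced by `exp`. The functions `exp ∘ f` are closed under multiplication, so
their span is an algebra with the same separation relation as `S`, and Stone–Weierstrass on the
quotient by this relation concludes.
-/

noncomputable section Approximation

open MeasureTheory Topology Filter
open scoped ContDiff

theorem mem_closure_iff_forall_isCompact_exists_dist_lt {X E : Type*} [TopologicalSpace X]
    [PseudoMetricSpace E] {S : Set C(X, E)} {g : C(X, E)} :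
    g ∈ closure S ↔
      ∀ K : Set X, IsCompact K → ∀ ε > 0, ∃ f ∈ S, ∀ x ∈ K, dist (g x) (f x) < ε := by
  rw [mem_closure_iff_nhds_basis
    (nhds_basis_uniformity' Metric.uniformity_basis_dist.compactConvergenceUniformity)]
  exact ⟨fun h K hK ε hε => h (K, ε) ⟨hK, hε⟩, fun h p hp => h p.1 hp.1 p.2 hp.2⟩

theorem integral_mem_of_isClosed {α E : Type*} [MeasurableSpace α] {μ : Measure α}
    [NormedAddCommGroup E] [NormedSpace ℝ E] [CompleteSpace E] {W : Submodule ℝ E}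
    (hW : IsClosed (W : Set E)) {f : α → E} (hf : Integrable f μ) (hfW : ∀ a, f a ∈ W) :
    ∫ a, f a ∂μ ∈ W := by
  have hquot : W.mkQL (∫ a, f a ∂μ) = 0 := by
    rw [← W.mkQL.integral_comp_comm hf]
    simp [(Submodule.Quotient.mk_eq_zero W).2 (hfW _)]
  simpa using hquot

theorem mem_of_forall_eq_integral {α X E : Type*} [TopologicalSpace α] [MeasurableSpace α]
    [OpensMeasurableSpace α] {μ : Measure α} [IsFiniteMeasureOnCompacts μ] [TopologicalSpace X]
    [NormedAddCommGroup E] [NormedSpace ℝ E] [CompleteSpace E]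
    {V : Submodule ℝ C(X, E)} (hV : IsClosed (V : Set C(X, E))) {F : α → C(X, E)}
    (hF : Continuous F) (hFc : HasCompactSupport F) (hFV : ∀ t, F t ∈ V) {g : C(X, E)}
    (hg : ∀ x, g x = ∫ t, F t x ∂μ) : g ∈ V := by
  refine hV.closure_subset (mem_closure_iff_forall_isCompact_exists_dist_lt.2 fun K hK ε hε => ?_)
  have := isCompact_iff_compactSpace.1 hK
  let restr := ContinuousMap.compCLM ℝ E (ContinuousMap.restrict K (.id X))
  have hint : Integrable (fun t => restr (F t)) μ :=
    (restr.continuous.comp hF).integrable_of_hasCompactSupport (hFc.comp_left restr.map_zero)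
  have hmem : ∫ t, restr (F t) ∂μ ∈ closure (V.map restr.toLinearMap : Set C(K, E)) :=
    integral_mem_of_isClosed (V.map restr.toLinearMap).isClosed_topologicalClosure hint
      fun t => subset_closure ⟨F t, hFV t, rfl⟩
  obtain ⟨_, ⟨f, hf, rfl⟩, hdist⟩ := Metric.mem_closure_iff.1 hmem ε hε
  refine ⟨f, hf, fun x hx => ?_⟩
  have hgx : (∫ t, restr (F t) ∂μ) ⟨x, hx⟩ = g x := by
    rw [ContinuousMap.integral_apply hint, hg]
    rfl
  rw [← hgx]
  exact (ContinuousMap.dist_apply_le_dist _).trans_lt hdist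

/-- The space of polynomial functions on `ℝ` of degree less than `n`, inside all functions with the
topology of pointwise convergence. -/
def polynomialFunctionsLT (n : ℕ) : Submodule ℝ (ℝ → ℝ) :=
  (Polynomial.degreeLT ℝ n).map (LinearMap.pi Polynomial.leval)

theorem mem_polynomialFunctionsLT {n : ℕ} {f : ℝ → ℝ} : f ∈ polynomialFunctionsLT n ↔
    ∃ p ∈ Polynomial.degreeLT ℝ n, ∀ x, f x = p.eval x := by
  simp [polynomialFunctionsLT, funext_iff, eq_comm]

theorem isClosed_polynomialFunctionsLT (n : ℕ) :
    IsClosed (polynomialFunctionsLT n : Set (ℝ → ℝ)) := by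
  have : FiniteDimensional ℝ (Polynomial.degreeLT ℝ n) :=
    (Polynomial.degreeLTEquiv ℝ n).symm.finiteDimensional
  have : FiniteDimensional ℝ (polynomialFunctionsLT n) := Module.Finite.map _ _
  exact Submodule.closed_of_finiteDimensional _

theorem mem_polynomialFunctionsLT_of_iteratedDeriv_eq_zero {n : ℕ} {f : ℝ → ℝ}
    (hf : ContDiff ℝ (n + 1) f) (h : ∀ x, iteratedDeriv (n + 1) f x = 0) :
    f ∈ polynomialFunctionsLT (n + 1) := by
  have hder (x t : ℝ) : HasDerivAt (fun s => taylorWithinEval f n Set.univ s x) 0 t := by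
    have := hasDerivWithinAt_taylorWithinEval (x := x) (n := n) uniqueDiffOn_univ univ_mem
      (Set.mem_univ t) subset_rfl (hf.of_le (by simp)).contDiffOn
      (hf.contDiffOn.differentiableOn_iteratedDerivWithin (by norm_cast; simp) uniqueDiffOn_univ t
        (Set.mem_univ t))
    simpa [iteratedDerivWithin_univ, h] using this
  have htaylor (x : ℝ) : f x = taylorWithinEval f n Set.univ 0 x := by
    rw [← is_const_of_deriv_eq_zero (fun t => (hder x t).differentiableAt)
      (fun t => (hder x t).deriv) x 0, taylorWithinEval_self]
  refine mem_polynomialFunctionsLT.2 ⟨∑ k ∈ Finset.range (n + 1),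
    Polynomial.monomial k ((k.factorial : ℝ)⁻¹ * iteratedDeriv k f 0),
    sum_mem fun k hk => ?_, fun x => ?_⟩
  · exact Polynomial.mem_degreeLT.2 ((Polynomial.degree_monomial_le _ _).trans_lt
      (by exact_mod_cast Finset.mem_range.1 hk))
  · rw [htaylor, taylor_within_apply, Polynomial.eval_finsetSum]
    exact Finset.sum_congr rfl fun k _ => by
      simp only [sub_zero, iteratedDerivWithin_univ, smul_eq_mul, Polynomial.eval_monomial]
      ring

theorem mem_of_forall_hasDerivAt {X : Type*} [TopologicalSpace X] {V : Submodule ℝ C(X, ℝ)}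
    (hV : IsClosed (V : Set C(X, ℝ))) {F F' : ℝ → C(X, ℝ)} (hF' : Continuous F')
    (hF : ∀ a x, HasDerivAt (fun b => F b x) (F' a x) a) (hFV : ∀ a, F a ∈ V) (a : ℝ) :
    F' a ∈ V := by
  refine hV.closure_subset (mem_closure_iff_forall_isCompact_exists_dist_lt.2 fun K hK ε hε => ?_)
  have hunif := ContinuousMap.tendsto_iff_forall_isCompact_tendstoUniformlyOn.1
    (hF'.tendsto a) K hK
  obtain ⟨δ, hδ, hclose⟩ := Metric.eventually_nhds_iff.1
    (Metric.tendstoUniformlyOn_iff.1 hunif ε hε)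
  obtain ⟨b, hab, hbδ⟩ := exists_between (lt_add_of_pos_right a hδ)
  refine ⟨(b - a)⁻¹ • (F b - F a), V.smul_mem _ (V.sub_mem (hFV b) (hFV a)), fun x hx => ?_⟩
  obtain ⟨ξ, hξ, hslope⟩ := exists_hasDerivAt_eq_slope (fun b => F b x) (fun b => F' b x) hab
    (fun c _ => (hF c x).continuousAt.continuousWithinAt) fun c _ => hF c x
  have hξδ : dist ξ a < δ := by
    rw [Real.dist_eq, abs_of_pos (sub_pos.2 hξ.1)]
    linarith [hξ.2]
  simpa [hslope, div_eq_inv_mul] using hclose hξδ x hx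

/-- Stability of a space of functions on `ℝ` under affine changes of variable `x ↦ a * x + b`,
including the constant ones (`a = 0`). -/
def IsAffineStable (V : Submodule ℝ C(ℝ, ℝ)) : Prop :=
  ∀ τ ∈ V, ∀ a b : ℝ, (⟨fun x => τ (a * x + b), by fun_prop⟩ : C(ℝ, ℝ)) ∈ V

variable {V : Submodule ℝ C(ℝ, ℝ)}

theorem IsAffineStable.convolution_mem (hV : IsAffineStable V)
    (hVc : IsClosed (V : Set C(ℝ, ℝ))) {σ : C(ℝ, ℝ)} (hσ : σ ∈ V) {φ : ℝ → ℝ}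
    (hφ : Continuous φ) (hφc : HasCompactSupport φ) {τ : C(ℝ, ℝ)}
    (hτ : ∀ x, τ x = convolution φ σ (ContinuousLinearMap.lsmul ℝ ℝ) volume x) : τ ∈ V := by
  let translate : ℝ → C(ℝ, ℝ) := fun t => ⟨fun x => σ (1 * x + -t), by fun_prop⟩
  have htranslate : Continuous translate := ContinuousMap.continuous_of_continuous_uncurry _ (by
    simp only [Function.uncurry_def, translate, ContinuousMap.coe_mk]
    fun_prop)
  refine mem_of_forall_eq_integral (μ := volume) hVc (hφ.smul htranslate) hφc.smul_right
    (fun t => V.smul_mem _ (hV σ hσ 1 (-t))) fun x => ?_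
  simp [hτ, convolution_def, translate, sub_eq_add_neg]

theorem IsAffineStable.pow_mul_iteratedDeriv_mem (hV : IsAffineStable V)
    (hVc : IsClosed (V : Set C(ℝ, ℝ))) {τ : C(ℝ, ℝ)} (hτ : τ ∈ V) (hsm : ContDiff ℝ ∞ τ)
    (n : ℕ) (a b : ℝ) {g : C(ℝ, ℝ)} (hg : ∀ x, g x = x ^ n * iteratedDeriv n τ (a * x + b)) :
    g ∈ V := by
  have hcont (k : ℕ) : Continuous (iteratedDeriv k τ) :=
    hsm.continuous_iteratedDeriv k (by exact_mod_cast le_top)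
  induction n generalizing a g with
  | zero =>
    convert hV τ hτ a b using 1
    ext x
    simp [hg]
  | succ n ih =>
    let F (k : ℕ) (a : ℝ) : C(ℝ, ℝ) := ⟨fun x => x ^ k * iteratedDeriv k τ (a * x + b), by
      have := hcont k
      fun_prop⟩
    have hF : Continuous (F (n + 1)) := ContinuousMap.continuous_of_continuous_uncurry _ (by
      have := hcont (n + 1)
      simp only [Function.uncurry_def, F, ContinuousMap.coe_mk]
      fun_prop)
    have hderiv (a x : ℝ) : HasDerivAt (fun s => F n s x) (F (n + 1) a x) a := by
      have hτ' := (hsm.differentiable_iteratedDeriv n (by exact_mod_cast ENat.natCast_lt_top n)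
        (a * x + b)).hasDerivAt
      have hlin : HasDerivAt (fun s => s * x + b) x a := by
        simpa using ((hasDerivAt_id a).mul_const x).add_const b
      refine ((hτ'.comp a hlin).const_mul (x ^ n)).congr_deriv ?_
      simp only [F, ContinuousMap.coe_mk, iteratedDeriv_succ]
      ring
    have hmem := mem_of_forall_hasDerivAt hVc hF hderiv (fun a => ih a fun _ => rfl) a
    rwa [show g = F (n + 1) a from ContinuousMap.ext hg]

theorem eq_top_of_forall_pow_mem (hVc : IsClosed (V : Set C(ℝ, ℝ)))
    (h : ∀ n, ContinuousMap.id ℝ ^ n ∈ V) : V = ⊤ := by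
  have hpoly (p : Polynomial ℝ) : p.toContinuousMap ∈ V := by
    have hp : p.toContinuousMap = ∑ i ∈ p.support, p.coeff i • ContinuousMap.id ℝ ^ i := by
      ext x
      simp [Polynomial.eval_eq_sum, Polynomial.sum_def]
    exact hp ▸ V.sum_mem fun i _ => V.smul_mem _ (h i)
  refine eq_top_iff.2 fun g _ => hVc.closure_subset
    (mem_closure_iff_forall_isCompact_exists_dist_lt.2 fun K hK ε hε => ?_)
  obtain ⟨p, hp⟩ := exists_polynomial_near_of_continuousOn (sInf K) (sSup K) g
    g.continuous.continuousOn ε hε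
  refine ⟨_, hpoly p, fun x hx => ?_⟩
  rw [dist_comm]
  exact hp x (hK.isBounded.subset_Icc_sInf_sSup hx)

theorem IsAffineStable.exists_seq_contDiff_mem (hV : IsAffineStable V)
    (hVc : IsClosed (V : Set C(ℝ, ℝ))) {σ : C(ℝ, ℝ)} (hσ : σ ∈ V) :
    ∃ τ : ℕ → C(ℝ, ℝ), (∀ m, τ m ∈ V) ∧ (∀ m, ContDiff ℝ ∞ (τ m)) ∧
      Tendsto (fun m => ⇑(τ m)) atTop (𝓝 σ) := by
  let φ : ℕ → ContDiffBump (0 : ℝ) := fun m =>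
    ⟨1 / (m + 1 : ℝ) / 2, 1 / (m + 1 : ℝ), by positivity, half_lt_self (by positivity)⟩
  have hφ : Tendsto (fun m => (φ m).rOut) atTop (𝓝 0) := tendsto_one_div_add_atTop_nhds_zero_nat
  have hsm (m : ℕ) := (φ m).hasCompactSupport_normed.contDiff_convolution_left (n := ⊤)
    (ContinuousLinearMap.lsmul ℝ ℝ) ((φ m).contDiff_normed (μ := volume))
    (σ.continuous.locallyIntegrable (μ := volume))
  refine ⟨fun m => ⟨_, (hsm m).continuous⟩, fun m => ?_, hsm, tendsto_pi_nhds.2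
    (ContDiffBump.convolution_tendsto_right_of_continuous hφ σ.continuous)⟩
  exact hV.convolution_mem hVc hσ (φ m).continuous_normed (φ m).hasCompactSupport_normed
    fun _ => rfl

theorem IsAffineStable.eq_top (hV : IsAffineStable V)
    (hVc : IsClosed (V : Set C(ℝ, ℝ))) {σ : C(ℝ, ℝ)} (hσ : σ ∈ V) (hσp : NotPolynomial σ) :
    V = ⊤ := by
  refine eq_top_of_forall_pow_mem hVc fun n => ?_
  by_contra hn
  obtain ⟨τ, hτV, hτ, hτσ⟩ := hV.exists_seq_contDiff_mem hVc hσ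
  have hzero (m : ℕ) (b : ℝ) : iteratedDeriv n (τ m) b = 0 := by
    by_contra hne
    refine hn ((V.smul_mem_iff hne).1 (hV.pow_mul_iteratedDeriv_mem hVc (hτV m) (hτ m) n 0 b
      fun x => ?_))
    simp [mul_comm]
  have hpoly (m : ℕ) : ⇑(τ m) ∈ polynomialFunctionsLT (n + 1) :=
    mem_polynomialFunctionsLT_of_iteratedDeriv_eq_zero ((hτ m).of_le (by exact_mod_cast le_top))
      fun x => by rw [iteratedDeriv_succ, funext (hzero m), deriv_const]
  obtain ⟨p, -, hp⟩ := mem_polynomialFunctionsLT.1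
    ((isClosed_polynomialFunctionsLT _).mem_of_tendsto hτσ (.of_forall hpoly))
  exact hσp ⟨p, hp⟩

end Approximation

noncomputable section ActivationSpan

variable {X : Type*} [TopologicalSpace X]

theorem mem_closure_subalgebra_of_forall_eq {A : Subalgebra ℝ C(X, ℝ)} {g : C(X, ℝ)}
    (hg : ∀ x y, (∀ f ∈ A, f x = f y) → g x = g y) : g ∈ closure (A : Set C(X, ℝ)) := by
  let s : Setoid X := ⟨fun x y => ∀ f ∈ A, f x = f y, fun _ _ _ => rfl,
    fun h f hf => (h f hf).symm, fun h h' f hf => (h f hf).trans (h' f hf)⟩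
  let π : C(X, Quotient s) := ⟨Quotient.mk s, continuous_quotient_mk'⟩
  let descend (f : C(X, ℝ)) (hf : ∀ x y, s x y → f x = f y) : C(Quotient s, ℝ) :=
    ⟨Quotient.lift f hf, f.continuous.quotient_lift hf⟩
  let B : Subalgebra ℝ C(Quotient s, ℝ) := A.comap (ContinuousMap.compRightAlgHom ℝ ℝ π)
  have hB : B.SeparatesPoints := by
    intro p q
    induction p, q using Quotient.inductionOn₂ with | _ x y => ?_
    intro hxy
    obtain ⟨f, hf, hne⟩ : ∃ f ∈ A, f x ≠ f y := by
      contrapose! hxy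
      exact Quotient.sound hxy
    exact ⟨_, ⟨descend f fun _ _ h => h f hf, hf, rfl⟩, hne⟩
  refine mem_closure_iff_forall_isCompact_exists_dist_lt.2 fun K hK ε hε => ?_
  obtain ⟨f, hf, hfg⟩ :=
    ContinuousMap.exists_mem_subalgebra_near_continuous_of_isCompact_of_separatesPoints hB
      (descend g hg) (hK.image π.continuous) hε
  refine ⟨f.comp π, hf, fun x hx => ?_⟩
  rw [dist_comm]
  exact hfg (π x) ⟨x, hx, rfl⟩

/-- The linear span of the functions `σ ∘ f` with `f ∈ S`: the shallow networks with activation `σ`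
on the features `S`. -/
def activationSpan (σ : C(ℝ, ℝ)) (S : Submodule ℝ C(X, ℝ)) : Submodule ℝ C(X, ℝ) :=
  Submodule.span ℝ (σ.comp '' S)

variable {S : Submodule ℝ C(X, ℝ)} {σ : C(ℝ, ℝ)}

theorem one_mem_activationSpan (h1 : 1 ∈ S) (hσ : σ ≠ 0) : 1 ∈ activationSpan σ S := by
  obtain ⟨t, ht⟩ := DFunLike.ne_iff.1 hσ
  rw [← (activationSpan σ S).smul_mem_iff ht]
  exact Submodule.subset_span ⟨t • 1, S.smul_mem t h1, by ext; simp⟩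

theorem eq_of_mem_closure_activationSpan {g : C(X, ℝ)}
    (hg : g ∈ closure (activationSpan σ S : Set C(X, ℝ))) {x y : X}
    (hxy : ∀ f ∈ S, f x = f y) : g x = g y := by
  have hclosed : IsClosed {f : C(X, ℝ) | f x = f y} := isClosed_eq (by fun_prop) (by fun_prop)
  refine closure_minimal (fun f hf => ?_) hclosed hg
  induction hf using Submodule.span_induction with
  | mem _ hf =>
    obtain ⟨f, hf, rfl⟩ := hf
    exact congrArg σ (hxy f hf)
  | zero => rfl
  | add f f' _ _ h h' => exact congrArg₂ (· + ·) h h'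
  | smul a f _ h => exact congrArg (a * ·) h

theorem comp_mem_closure_activationSpan (h1 : 1 ∈ S) (hσ : NotPolynomial σ)
    (τ : C(ℝ, ℝ)) {f : C(X, ℝ)} (hf : f ∈ S) :
    τ.comp f ∈ (activationSpan σ S).topologicalClosure := by
  let W := (activationSpan σ S).topologicalClosure
  let V : Submodule ℝ C(ℝ, ℝ) := ⨅ f : S, W.comap (ContinuousMap.compCLM ℝ ℝ f.1).toLinearMap
  have hmem {τ : C(ℝ, ℝ)} : τ ∈ V ↔ ∀ f ∈ S, τ.comp f ∈ W := by simp [V]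
  have hVc : IsClosed (V : Set C(ℝ, ℝ)) := by
    simp only [V, Submodule.coe_iInf]
    exact isClosed_iInter fun f => (activationSpan σ S).isClosed_topologicalClosure.preimage
      (ContinuousMap.continuous_precomp f.1)
  have hV : IsAffineStable V := fun τ hτ a b => hmem.2 fun f hf => by
    convert hmem.1 hτ (a • f + b • 1) (S.add_mem (S.smul_mem a hf) (S.smul_mem b h1)) using 1
    ext x
    simp
  have hσV : σ ∈ V := hmem.2 fun f hf => subset_closure (Submodule.subset_span ⟨f, hf, rfl⟩)
  exact hmem.1 (hV.eq_top hVc hσV hσ ▸ Submodule.mem_top) f hf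

/-- The functions `exp ∘ f` with `f ∈ S`, as a multiplicative submonoid. -/
def expSubmonoid (S : Submodule ℝ C(X, ℝ)) : Submonoid C(X, ℝ) where
  carrier := (⟨Real.exp, Real.continuous_exp⟩ : C(ℝ, ℝ)).comp '' S
  one_mem' := ⟨0, S.zero_mem, by ext; simp⟩
  mul_mem' := by
    rintro _ _ ⟨f, hf, rfl⟩ ⟨g, hg, rfl⟩
    exact ⟨f + g, S.add_mem hf hg, by ext; simp [Real.exp_add]⟩

theorem adjoin_expSubmonoid_le_topologicalClosure (h1 : 1 ∈ S) (hσ : NotPolynomial σ) :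
    Subalgebra.toSubmodule (Algebra.adjoin ℝ (expSubmonoid S)) ≤
      (activationSpan σ S).topologicalClosure := by
  rw [Algebra.adjoin_eq_span, Submonoid.closure_eq, Submodule.span_le]
  rintro _ ⟨f, hf, rfl⟩
  exact comp_mem_closure_activationSpan h1 hσ _ hf

theorem mem_closure_activationSpan_iff (h1 : 1 ∈ S) (hσ : NotPolynomial σ) {g : C(X, ℝ)} :
    g ∈ closure (activationSpan σ S : Set C(X, ℝ)) ↔
      ∀ x y, (∀ f ∈ S, f x = f y) → g x = g y := by
  refine ⟨fun hg x y hxy => eq_of_mem_closure_activationSpan hg hxy, fun hg => ?_⟩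
  refine closure_minimal (adjoin_expSubmonoid_le_topologicalClosure h1 hσ)
    (activationSpan σ S).isClosed_topologicalClosure
    (mem_closure_subalgebra_of_forall_eq fun x y hxy => ?_)
  refine hg x y fun f hf => Real.exp_injective ?_
  exact hxy _ (Algebra.subset_adjoin ⟨f, hf, rfl⟩)

end ActivationSpan

section LayerPowers

variable {Y Z : Type} {M : Set ((Y → ℝ) → (Z → ℝ))}

/-- Juxtaposition of two families of feature maps. -/
def stack {k l : ℕ} (u : Fin k × Z → ℝ) (w : Fin l × Z → ℝ) : Fin (k + l) × Z → ℝ :=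
  fun p => Fin.append (fun i => u (i, p.2)) (fun i => w (i, p.2)) p.1

@[simp]
theorem stack_castAdd {k l : ℕ} (u : Fin k × Z → ℝ) (w : Fin l × Z → ℝ) (i : Fin k)
    (z : Z) : stack u w (Fin.castAdd l i, z) = u (i, z) := by
  simp [stack]

@[simp]
theorem stack_natAdd {k l : ℕ} (u : Fin k × Z → ℝ) (w : Fin l × Z → ℝ) (i : Fin l)
    (z : Z) : stack u w (Fin.natAdd k i, z) = w (i, z) := by
  simp [stack]

theorem act_stack (σ : ℝ → ℝ) {k l : ℕ} (u : Fin k × Z → ℝ) (w : Fin l × Z → ℝ) :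
    act σ (stack u w) = stack (act σ u) (act σ w) := by
  ext ⟨i, z⟩
  refine Fin.addCases (fun i => ?_) (fun i => ?_) i <;> simp [act]

theorem stack_mem_layerPowIn {h h' : ℕ}
    {F : (Y → ℝ) → (Fin h × Z → ℝ)} {F' : (Y → ℝ) → (Fin h' × Z → ℝ)}
    (hF : F ∈ layerPowIn M h) (hF' : F' ∈ layerPowIn M h') :
    (fun v => stack (F v) (F' v)) ∈ layerPowIn M (h + h') := by
  obtain ⟨f, hf, hFf⟩ := hF
  obtain ⟨f', hf', hFf'⟩ := hF'
  refine ⟨Fin.append f f', fun i => ?_, fun v ⟨i, z⟩ => ?_⟩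
  · refine Fin.addCases (fun i => ?_) (fun i => ?_) i <;> simp [hf, hf']
  · refine Fin.addCases (fun i => ?_) (fun i => ?_) i <;> simp [hFf, hFf']

theorem exists_layerPow_stack (h0 : (fun _ => 0) ∈ M) {k k' h h' : ℕ}
    {F : (Fin k × Y → ℝ) → (Fin h × Z → ℝ)} {F' : (Fin k' × Y → ℝ) → (Fin h' × Z → ℝ)}
    (hF : F ∈ layerPow M k h) (hF' : F' ∈ layerPow M k' h') :
    ∃ H ∈ layerPow M (k + k') (h + h'), ∀ u w, H (stack u w) = stack (F u) (F' w) := by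
  obtain ⟨f, hf, hFf⟩ := hF
  obtain ⟨f', hf', hFf'⟩ := hF'
  let e : Fin (h + h') → Fin (k + k') → ((Y → ℝ) → (Z → ℝ)) :=
    Fin.append (fun i => Fin.append (f i) (fun _ _ => 0))
      (fun i => Fin.append (fun _ _ => 0) (f' i))
  refine ⟨fun v p => ∑ j, e p.1 j (fun y => v (j, y)) p.2,
    ⟨e, fun i j => ?_, fun _ _ => rfl⟩, fun u w => ?_⟩
  · refine Fin.addCases (fun i => ?_) (fun i => ?_) i <;>
      refine Fin.addCases (fun j => ?_) (fun j => ?_) j <;> simp [e, hf, hf', h0]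
  · ext ⟨i, z⟩
    refine Fin.addCases (fun i => ?_) (fun i => ?_) i <;>
      simp [e, Fin.sum_univ_add, hFf, hFf']

theorem exists_layerPowOut_stack {k k' : ℕ}
    {F : (Fin k × Y → ℝ) → (Z → ℝ)} {F' : (Fin k' × Y → ℝ) → (Z → ℝ)}
    (hF : F ∈ layerPowOut M k) (hF' : F' ∈ layerPowOut M k') :
    ∃ H ∈ layerPowOut M (k + k'), ∀ u w, H (stack u w) = F u + F' w := by
  obtain ⟨f, hf, hFf⟩ := hF
  obtain ⟨f', hf', hFf'⟩ := hF'
  refine ⟨fun v z => ∑ j, Fin.append f f' j (fun y => v (j, y)) z,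
    ⟨Fin.append f f', fun j => ?_, fun _ _ => rfl⟩, fun u w => ?_⟩
  · refine Fin.addCases (fun i => ?_) (fun i => ?_) j <;> simp [hf, hf']
  · ext z
    simp [Fin.sum_univ_add, hFf, hFf']

theorem smul_mem_layerPowOut {a : ℝ} (hM : ∀ f ∈ M, (fun v => a • f v) ∈ M) {k : ℕ}
    {F : (Fin k × Y → ℝ) → (Z → ℝ)} (hF : F ∈ layerPowOut M k) :
    (fun v => a • F v) ∈ layerPowOut M k := by
  obtain ⟨f, hf, hFf⟩ := hF
  exact ⟨fun j v => a • f j v, fun j => hM _ (hf j), fun v z => by simp [hFf, Finset.mul_sum]⟩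

theorem continuous_act {σ : ℝ → ℝ} (hσ : Continuous σ) :
    Continuous (act σ : (Z → ℝ) → (Z → ℝ)) :=
  continuous_pi fun z => hσ.comp (continuous_apply z)

theorem continuous_of_mem_layerPow (hM : ∀ f ∈ M, Continuous f) {k h : ℕ}
    {F : (Fin k × Y → ℝ) → (Fin h × Z → ℝ)}
    (hF : F ∈ layerPow M k h) : Continuous F := by
  obtain ⟨f, hf, hFf⟩ := hF
  refine continuous_pi fun p => ?_
  simp_rw [hFf]
  exact continuous_finsetSum _ fun j _ => (continuous_apply p.2).comp
    ((hM _ (hf p.1 j)).comp (by fun_prop))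

theorem continuous_of_mem_layerPowOut (hM : ∀ f ∈ M, Continuous f) {k : ℕ}
    {F : (Fin k × Y → ℝ) → (Z → ℝ)}
    (hF : F ∈ layerPowOut M k) : Continuous F := by
  obtain ⟨f, hf, hFf⟩ := hF
  refine continuous_pi fun z => ?_
  simp_rw [hFf]
  exact continuous_finsetSum _ fun j _ => (continuous_apply z).comp
    ((hM _ (hf j)).comp (by fun_prop))

end LayerPowers

section Chains

variable {σ : ℝ → ℝ} {d : ℕ} {Y : Fin (d + 2) → Type}
  {M : ∀ i : Fin (d + 1), Set ((Y i.castSucc → ℝ) → (Y i.succ → ℝ))}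

theorem stack_mem_WPre (hM : ∀ i, (fun _ => 0) ∈ M i) {k k' : ℕ}
    {g : (Y 0 → ℝ) → (Fin k × Y (Fin.last (d + 1)) → ℝ)}
    {g' : (Y 0 → ℝ) → (Fin k' × Y (Fin.last (d + 1)) → ℝ)}
    (hg : g ∈ WPre σ d Y M k) (hg' : g' ∈ WPre σ d Y M k') :
    (fun v => stack (g v) (g' v)) ∈ WPre σ d Y M (k + k') := by
  induction d generalizing k k' with
  | zero => exact stack_mem_layerPowIn (M := M 0) hg hg'
  | succ d ih =>
    obtain ⟨l, g, hg, f, hf, rfl⟩ := hg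
    obtain ⟨l', g', hg', f', hf', rfl⟩ := hg'
    obtain ⟨H, hH, hHe⟩ := exists_layerPow_stack (hM _) hf hf'
    refine ⟨l + l', _, ih (Y := fun i => Y i.castSucc) (fun i => hM i.castSucc) hg hg', H, hH, ?_⟩
    ext1 v
    exact ((congrArg H (act_stack σ (g v) (g' v))).trans (hHe _ _)).symm

theorem WPre_nonempty (hM : ∀ i, (fun _ => 0) ∈ M i) (k : ℕ) :
    (WPre σ d Y M k).Nonempty := by
  induction d generalizing k with
  | zero => exact ⟨fun _ _ => 0, fun _ _ => 0, fun _ => hM 0, fun _ _ => rfl⟩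
  | succ d ih =>
    obtain ⟨g, hg⟩ := ih (Y := fun i => Y i.castSucc) (fun i => hM i.castSucc) 0
    exact ⟨_, 0, g, hg, fun _ _ => 0, ⟨fun _ _ _ => 0, fun _ _ => hM _, by simp⟩, rfl⟩

theorem continuous_of_mem_WPre (hσ : Continuous σ) (hM : ∀ i, ∀ f ∈ M i, Continuous f)
    {k : ℕ} {g : (Y 0 → ℝ) → (Fin k × Y (Fin.last (d + 1)) → ℝ)}
    (hg : g ∈ WPre σ d Y M k) : Continuous g := by
  induction d generalizing k with
  | zero =>
    obtain ⟨f, hf, hgf⟩ := hg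
    refine continuous_pi fun p => ?_
    simp_rw [hgf]
    exact (continuous_apply p.2).comp (hM 0 _ (hf p.1))
  | succ d ih =>
    obtain ⟨l, g, hg, f, hf, rfl⟩ := hg
    exact (continuous_of_mem_layerPow (hM _) hf).comp
      ((continuous_act hσ).comp (ih (Y := fun i => Y i.castSucc) (fun i => hM i.castSucc) hg))

end Chains

section UniformClosure

theorem continuous_of_mem_unifClosure {A B : Type} [TopologicalSpace A]
    [WeaklyLocallyCompactSpace A] [PseudoMetricSpace B] {S : Set (A → B)}
    (hS : ∀ f ∈ S, Continuous f) {F : A → B} (hF : F ∈ UnifClosure S) : Continuous F := by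
  refine continuous_iff_continuousAt.2 fun x => ?_
  obtain ⟨K, hK, hxK⟩ := exists_compact_mem_nhds x
  refine ContinuousOn.continuousAt ?_ hxK
  refine continuousOn_of_uniform_approx_of_continuousOn fun u hu => ?_
  obtain ⟨ε, hε, hεu⟩ := Metric.mem_uniformity_dist.1 hu
  obtain ⟨g, hg, hgd⟩ := hF K hK ε hε
  exact ⟨g, (hS g hg).continuousOn, fun y hy => hεu (hgd y hy)⟩

theorem sepRel_unifClosure {A B : Type} [TopologicalSpace A] [MetricSpace B] (S : Set (A → B)) :
    sepRel (UnifClosure S) = sepRel S := by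
  ext ⟨p, q⟩
  constructor
  · exact fun h f hf => h f fun K _ ε hε => ⟨f, hf, fun x _ => by simpa using hε⟩
  · intro h F hF
    refine eq_of_forall_dist_le fun ε hε => ?_
    obtain ⟨g, hg, hgF⟩ := hF {p, q} (Set.toFinite _).isCompact (ε / 2) (half_pos hε)
    calc dist (F p) (F q) ≤ dist (F p) (g p) + dist (F q) (g p) := dist_triangle_right _ _ _
      _ = dist (F p) (g p) + dist (F q) (g q) := by rw [h g hg]
      _ ≤ ε / 2 + ε / 2 := add_le_add (hgF p (by simp)).le (hgF q (by simp)).le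
      _ = ε := add_halves ε

end UniformClosure

section UnitValued

variable {X : Type} [TopologicalSpace X]

/-- A continuous scalar function as a map into `ℝ^Unit`, the encoding of `ℝ` as a permutation
representation. -/
def toUnit (f : C(X, ℝ)) : X → Unit → ℝ := fun x _ => f x

theorem toUnit_apply_eq_iff {f g : C(X, ℝ)} {x y : X} : toUnit f x = toUnit g y ↔ f x = g y :=
  Function.const_inj

theorem dist_toUnit (f g : C(X, ℝ)) (x : X) : dist (toUnit f x) (toUnit g x) = dist (f x) (g x) :=
  dist_pi_const _ _

theorem continuous_iff_exists_toUnit_eq {F : X → Unit → ℝ} :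
    Continuous F ↔ ∃ f, toUnit f = F :=
  ⟨fun _ => ⟨⟨fun x => F x (), by fun_prop⟩, rfl⟩,
    fun ⟨f, hf⟩ => hf ▸ continuous_pi fun _ => f.continuous⟩

theorem toUnit_mem_unifClosure_iff {T : Set C(X, ℝ)} {f : C(X, ℝ)} :
    toUnit f ∈ UnifClosure (toUnit '' T) ↔ f ∈ closure T := by
  simp [UnifClosure, mem_closure_iff_forall_isCompact_exists_dist_lt, dist_toUnit]

theorem unifClosure_image_toUnit [WeaklyLocallyCompactSpace X] (T : Set C(X, ℝ)) :
    UnifClosure (toUnit '' T) = toUnit '' closure T := by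
  ext F
  refine ⟨fun hF => ?_, ?_⟩
  · have hT : ∀ f ∈ toUnit '' T, Continuous f := by
      rintro _ ⟨f, -, rfl⟩
      exact continuous_iff_exists_toUnit_eq.2 ⟨f, rfl⟩
    obtain ⟨f, rfl⟩ := continuous_iff_exists_toUnit_eq.1 (continuous_of_mem_unifClosure hT hF)
    exact ⟨f, toUnit_mem_unifClosure_iff.1 hF, rfl⟩
  · rintro ⟨f, hf, rfl⟩
    exact toUnit_mem_unifClosure_iff.2 hf

theorem Crho_sepRel_image_toUnit (S : Set C(X, ℝ)) :
    Crho (sepRel (toUnit '' S)) =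
      toUnit '' {g | ∀ x y, (∀ f ∈ S, f x = f y) → g x = g y} := by
  have hsep (g : C(X, ℝ)) : (∀ p ∈ sepRel (toUnit '' S), toUnit g p.1 = toUnit g p.2) ↔
      ∀ x y, (∀ f ∈ S, f x = f y) → g x = g y := by
    simp [sepRel, toUnit_apply_eq_iff]
  ext F
  constructor
  · rintro ⟨hF, hρ⟩
    obtain ⟨g, rfl⟩ := continuous_iff_exists_toUnit_eq.1 hF
    exact ⟨g, (hsep g).1 hρ, rfl⟩
  · rintro ⟨g, hg, rfl⟩
    exact ⟨continuous_iff_exists_toUnit_eq.2 ⟨g, rfl⟩, (hsep g).2 hg⟩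

end UnitValued

noncomputable section Networks

/-- The properties of a layer space used for the layers feeding the final readout: it contains zero
and consists of continuous maps. -/
structure IsHiddenLayer {Y Z : Type} (M : Set ((Y → ℝ) → (Z → ℝ))) : Prop where
  zero_mem : (fun _ => 0) ∈ M
  continuous : ∀ f ∈ M, Continuous f

/-- The properties of a layer space used for the last layer before the fully connected readout:
it contains the constant one, is stable under scaling and consists of continuous maps. -/
structure IsReadoutLayer {Y Z : Type} (N : Set ((Y → ℝ) → (Z → ℝ))) : Prop where
  one_mem : (fun _ => 1) ∈ N
  smul_mem : ∀ (a : ℝ), ∀ f ∈ N, (fun v => a • f v) ∈ N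
  continuous : ∀ f ∈ N, Continuous f

theorem IsReadoutLayer.const_mem {Y Z : Type} {N : Set ((Y → ℝ) → (Z → ℝ))}
    (hN : IsReadoutLayer N) (c : ℝ) : (fun _ _ => c) ∈ N := by
  convert hN.smul_mem c _ hN.one_mem using 3
  simp

/-- The union of the neural spaces `N(M₀, …, M_d, N)` over all multiplicities, whose closure is
`U(M₀, …, M_d, N)`. -/
def networkSet (σ : ℝ → ℝ) (d : ℕ) (Y : Fin (d + 2) → Type)
    (M : ∀ i : Fin (d + 1), Set ((Y i.castSucc → ℝ) → (Y i.succ → ℝ))) {Z : Type}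
    (N : Set ((Y (Fin.last (d + 1)) → ℝ) → (Z → ℝ))) : Set ((Y 0 → ℝ) → (Z → ℝ)) :=
  {F | ∃ k, ∃ g ∈ WPre σ d Y M k, ∃ f ∈ layerPowOut N k, F = fun v => f (act σ (g v))}

/-- The union of the neural spaces `N(M₀, …, M_d, N, L)` over all multiplicities, whose closure is
`U(M₀, …, M_d, N, L)`. -/
def readoutNetworkSet (σ : ℝ → ℝ) (d : ℕ) (Y : Fin (d + 2) → Type)
    (M : ∀ i : Fin (d + 1), Set ((Y i.castSucc → ℝ) → (Y i.succ → ℝ)))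
    (N : Set ((Y (Fin.last (d + 1)) → ℝ) → (Unit → ℝ))) : Set ((Y 0 → ℝ) → (Unit → ℝ)) :=
  {F | ∃ k, ∃ g ∈ WPre σ d Y M k, ∃ l, ∃ m ∈ layerPow N k l,
      ∃ f ∈ layerPowOut Lfull l, F = fun v => f (act σ (m (act σ (g v))))}

variable {σ : ℝ → ℝ} {d : ℕ} {Y : Fin (d + 2) → Type}
  {M : ∀ i : Fin (d + 1), Set ((Y i.castSucc → ℝ) → (Y i.succ → ℝ))} {Z : Type}
  {N : Set ((Y (Fin.last (d + 1)) → ℝ) → (Z → ℝ))}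

theorem add_mem_networkSet (hM : ∀ i, (fun _ => 0) ∈ M i) {F F' : (Y 0 → ℝ) → (Z → ℝ)}
    (hF : F ∈ networkSet σ d Y M N) (hF' : F' ∈ networkSet σ d Y M N) :
    F + F' ∈ networkSet σ d Y M N := by
  obtain ⟨k, g, hg, f, hf, rfl⟩ := hF
  obtain ⟨k', g', hg', f', hf', rfl⟩ := hF'
  obtain ⟨f'', hf'', hstack⟩ := exists_layerPowOut_stack hf hf'
  refine ⟨k + k', _, stack_mem_WPre hM hg hg', f'', hf'', ?_⟩
  ext1 v
  rw [act_stack, hstack]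
  rfl

theorem smul_mem_networkSet {a : ℝ} (hN : ∀ f ∈ N, (fun v => a • f v) ∈ N)
    {F : (Y 0 → ℝ) → (Z → ℝ)} (hF : F ∈ networkSet σ d Y M N) :
    a • F ∈ networkSet σ d Y M N := by
  obtain ⟨k, g, hg, f, hf, rfl⟩ := hF
  exact ⟨k, g, hg, _, smul_mem_layerPowOut hN hf, rfl⟩

theorem const_mem_networkSet (hM : ∀ i, (fun _ => 0) ∈ M i) {c : Z → ℝ}
    (hN : (fun _ => c) ∈ N) : (fun _ => c) ∈ networkSet σ d Y M N := by
  obtain ⟨g, hg⟩ := WPre_nonempty (σ := σ) hM 1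
  exact ⟨1, g, hg, fun _ => c, ⟨fun _ _ => c, fun _ => hN, by simp⟩, rfl⟩

theorem continuous_of_mem_networkSet (hσ : Continuous σ) (hM : ∀ i, ∀ f ∈ M i, Continuous f)
    (hN : ∀ f ∈ N, Continuous f) {F : (Y 0 → ℝ) → (Z → ℝ)} (hF : F ∈ networkSet σ d Y M N) :
    Continuous F := by
  obtain ⟨k, g, hg, f, hf, rfl⟩ := hF
  exact (continuous_of_mem_layerPowOut hN hf).comp
    ((continuous_act hσ).comp (continuous_of_mem_WPre hσ hM hg))

theorem smul_mem_Lfull (a : ℝ) : ∀ f ∈ Lfull, (fun v => a • f v) ∈ Lfull := by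
  rintro _ ⟨b, c, rfl⟩
  exact ⟨a * b, a * c, by ext; simp [mul_add, mul_assoc]⟩

variable {N : Set ((Y (Fin.last (d + 1)) → ℝ) → (Unit → ℝ))}

theorem add_mem_readoutNetworkSet (hM : ∀ i, (fun _ => 0) ∈ M i) (hN : (fun _ => 0) ∈ N)
    {F F' : (Y 0 → ℝ) → (Unit → ℝ)} (hF : F ∈ readoutNetworkSet σ d Y M N)
    (hF' : F' ∈ readoutNetworkSet σ d Y M N) : F + F' ∈ readoutNetworkSet σ d Y M N := by
  obtain ⟨k, g, hg, l, m, hm, f, hf, rfl⟩ := hF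
  obtain ⟨k', g', hg', l', m', hm', f', hf', rfl⟩ := hF'
  obtain ⟨f'', hf'', hf_stack⟩ := exists_layerPowOut_stack hf hf'
  obtain ⟨m'', hm'', hm_stack⟩ := exists_layerPow_stack hN hm hm'
  refine ⟨k + k', _, stack_mem_WPre hM hg hg', l + l', m'', hm'', f'', hf'', ?_⟩
  ext1 v
  rw [act_stack, hm_stack, act_stack, hf_stack]
  rfl

theorem smul_mem_readoutNetworkSet (a : ℝ) {F : (Y 0 → ℝ) → (Unit → ℝ)}
    (hF : F ∈ readoutNetworkSet σ d Y M N) : a • F ∈ readoutNetworkSet σ d Y M N := by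
  obtain ⟨k, g, hg, l, m, hm, f, hf, rfl⟩ := hF
  exact ⟨k, g, hg, l, m, hm, _, smul_mem_layerPowOut (smul_mem_Lfull a) hf, rfl⟩

theorem act_comp_mem_readoutNetworkSet {F : (Y 0 → ℝ) → (Unit → ℝ)}
    (hF : F ∈ networkSet σ d Y M N) : (fun v => act σ (F v)) ∈ readoutNetworkSet σ d Y M N := by
  obtain ⟨k, g, hg, f, ⟨e, he, hfe⟩, rfl⟩ := hF
  exact ⟨k, g, hg, 1, fun v p => f v p.2, ⟨fun _ => e, fun _ => he, fun v p => hfe v p.2⟩,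
    fun v u => v (0, u), ⟨fun _ v u => v u, fun _ => ⟨1, 0, by ext; simp⟩, by simp⟩, rfl⟩

theorem exists_eq_sum_of_mem_readoutNetworkSet {F : (Y 0 → ℝ) → (Unit → ℝ)}
    (hF : F ∈ readoutNetworkSet σ d Y M N) :
    ∃ (l : ℕ) (f : Fin l → (Y 0 → ℝ) → (Unit → ℝ)) (a b : Fin l → ℝ),
      (∀ j, f j ∈ networkSet σ d Y M N) ∧ ∀ v u, F v u = ∑ j, (a j * σ (f j v ()) + b j) := by
  obtain ⟨k, g, hg, l, m, ⟨e, he, hme⟩, f, ⟨c, hc, hfc⟩, rfl⟩ := hF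
  choose a b hab using hc
  refine ⟨l, fun j v u => m (act σ (g v)) (j, u), a, b, fun j => ?_, fun v u => ?_⟩
  · exact ⟨k, g, hg, fun v u => m v (j, u), ⟨e j, he j, fun v u => hme v (j, u)⟩, rfl⟩
  · simp [hfc, hab, act]

/-- The scalar networks `N(M₀, …, M_d, N)` as a linear space of continuous functions. -/
def networkSubmodule (σ : ℝ → ℝ) (hM : ∀ i, IsHiddenLayer (M i)) (hN : IsReadoutLayer N) :
    Submodule ℝ C(Y 0 → ℝ, ℝ) where
  carrier := toUnit ⁻¹' networkSet σ d Y M N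
  zero_mem' := const_mem_networkSet (fun i => (hM i).zero_mem) (hN.const_mem 0)
  add_mem' := add_mem_networkSet fun i => (hM i).zero_mem
  smul_mem' a _ := smul_mem_networkSet (hN.smul_mem a)

variable {hM : ∀ i, IsHiddenLayer (M i)} {hN : IsReadoutLayer N}

theorem one_mem_networkSubmodule : 1 ∈ networkSubmodule σ hM hN :=
  const_mem_networkSet (fun i => (hM i).zero_mem) hN.one_mem

theorem image_toUnit_networkSubmodule (hσ : Continuous σ) :
    toUnit '' (networkSubmodule σ hM hN) = networkSet σ d Y M N :=
  Set.image_preimage_eq_of_subset fun _ hF => continuous_iff_exists_toUnit_eq.1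
    (continuous_of_mem_networkSet hσ (fun i => (hM i).continuous) hN.continuous hF)

theorem toUnit_mem_readoutNetworkSet {σ : C(ℝ, ℝ)} {f : C(Y 0 → ℝ, ℝ)}
    (hf : f ∈ activationSpan σ (networkSubmodule σ hM hN)) :
    toUnit f ∈ readoutNetworkSet σ d Y M N := by
  have hM0 i := (hM i).zero_mem
  induction hf using Submodule.span_induction with
  | mem _ hf =>
    obtain ⟨f, hf, rfl⟩ := hf
    exact act_comp_mem_readoutNetworkSet hf
  | zero =>
    convert smul_mem_readoutNetworkSet 0 (act_comp_mem_readoutNetworkSet (σ := σ)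
      (one_mem_networkSubmodule (hM := hM) (hN := hN)))
    ext
    simp [toUnit]
  | add f f' _ _ hf hf' => exact add_mem_readoutNetworkSet hM0 (hN.const_mem 0) hf hf'
  | smul a f _ hf => exact smul_mem_readoutNetworkSet a hf

theorem readoutNetworkSet_subset_image_toUnit {σ : C(ℝ, ℝ)} (hσ : σ ≠ 0) :
    readoutNetworkSet σ d Y M N ⊆ toUnit '' (activationSpan σ (networkSubmodule σ hM hN)) := by
  intro F hF
  obtain ⟨l, f, a, b, hf, hFsum⟩ := exists_eq_sum_of_mem_readoutNetworkSet hF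
  simp only [← image_toUnit_networkSubmodule (hM := hM) (hN := hN) σ.continuous] at hf
  choose g hg hgf using hf
  refine ⟨∑ j, (a j • σ.comp (g j) + b j • 1), ?_, ?_⟩
  · exact sum_mem fun j _ => add_mem
      (Submodule.smul_mem _ _ (Submodule.subset_span ⟨g j, hg j, rfl⟩))
      (Submodule.smul_mem _ _ (one_mem_activationSpan one_mem_networkSubmodule hσ))
  · ext v u
    simp [toUnit, hFsum, ← hgf]

theorem IsLayerSpace.isHiddenLayer {G : Type} [Group G] {Y Z : Type} [Finite Y] [MulAction G Y]
    [MulAction G Z] {M : Set ((Y → ℝ) → (Z → ℝ))} (hM : IsLayerSpace G M) : IsHiddenLayer M := by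
  obtain ⟨k, φ, -, rfl⟩ := hM
  refine ⟨⟨0, 0, by simp, by simp⟩, fun f ⟨c, b, _, hf⟩ => ?_⟩
  rw [funext hf]
  exact (continuous_finsetSum _ fun i _ =>
    (φ i).continuous_on_pi.const_smul (c i)).add continuous_const

theorem IsLayerSpace.isReadoutLayer {G : Type} [Group G] {Y Z : Type} [Finite Y] [MulAction G Y]
    [MulAction G Z] {M : Set ((Y → ℝ) → (Z → ℝ))} (hM : IsLayerSpace G M) : IsReadoutLayer M := by
  refine ⟨?_, fun a f hf => ?_, hM.isHiddenLayer.continuous⟩ <;> obtain ⟨k, φ, -, rfl⟩ := hM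
  · exact ⟨0, 1, by simp, by simp⟩
  · obtain ⟨c, b, hb, hf⟩ := hf
    exact ⟨a • c, a • b, by simp [hb], by simp [hf, Finset.smul_sum, smul_smul]⟩

theorem IsReadoutLayer.image_coordinate {Y Z : Type} {M : Set ((Y → ℝ) → (Z → ℝ))}
    (hM : IsReadoutLayer M) (z : Z) :
    IsReadoutLayer ((fun (m : (Y → ℝ) → (Z → ℝ)) v (_ : Unit) => m v z) '' M) where
  one_mem := ⟨_, hM.one_mem, rfl⟩
  smul_mem := by
    rintro a _ ⟨m, hm, rfl⟩
    exact ⟨_, hM.smul_mem a m hm, rfl⟩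
  continuous := by
    rintro _ ⟨m, hm, rfl⟩
    exact continuous_pi fun _ => (continuous_apply z).comp (hM.continuous m hm)

theorem pushforward_readout_separation_constrained_universality_general
    {d : ℕ} {Y : Fin (d + 2) → Type} [Finite (Y 0)]
    (M : ∀ i : Fin (d + 1), Set ((Y i.castSucc → ℝ) → (Y i.succ → ℝ)))
    (hM : ∀ i, IsHiddenLayer (M i))
    (N : Set ((Y (Fin.last (d + 1)) → ℝ) → (Unit → ℝ))) (hN : IsReadoutLayer N)
    (σ : ℝ → ℝ) (hσc : Continuous σ) (hσp : NotPolynomial σ) :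
    UClassApp2 σ d Y M N Lfull = Crho (sepRel (UClassApp1 σ d Y M N)) := by
  let σ' : C(ℝ, ℝ) := ⟨σ, hσc⟩
  have hσ0 : σ' ≠ 0 := fun h => hσp ⟨0, fun t => (DFunLike.congr_fun h t).trans (by simp)⟩
  let S := networkSubmodule σ hM hN
  have hspan : readoutNetworkSet σ d Y M N = toUnit '' (activationSpan σ' S) :=
    (readoutNetworkSet_subset_image_toUnit hσ0).antisymm
      (Set.image_subset_iff.2 fun _ => toUnit_mem_readoutNetworkSet (σ := σ'))
  calc UClassApp2 σ d Y M N Lfull = UnifClosure (toUnit '' (activationSpan σ' S)) := by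
        rw [← hspan]; rfl
    _ = toUnit '' closure (activationSpan σ' S) := unifClosure_image_toUnit _
    _ = toUnit '' {g | ∀ x y, (∀ f ∈ S, f x = f y) → g x = g y} := by
        congr with g
        exact mem_closure_activationSpan_iff one_mem_networkSubmodule hσp
    _ = Crho (sepRel (toUnit '' S)) := (Crho_sepRel_image_toUnit _).symm
    _ = Crho (sepRel (UClassApp1 σ d Y M N)) := by
        rw [image_toUnit_networkSubmodule hσc, ← sepRel_unifClosure]
        rfl

end Networks

/-- Lemma `lemma:pseudo-inv-univ`: for a chain of layer spaces
`M₀, …, M_d` (last representation `ℝ^X`, `X := Y (Fin.last (d+1))`), a layer space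
`M ⊆ Aff_G(ℝ^X, ℝ^X)` containing the identity, the pushforward layer space
`P = π_{x*} M = { π_x ∘ m : m ∈ M } ⊆ Aff_{G_x}(ℝ^X, ℝ)` and the fully connected readout
`L = Aff(ℝ, ℝ)`, with `σ` continuous and not a polynomial, setting
`ρ = ρ(U(M₀, …, M_d, P))`, we have `U(M₀, …, M_d, P, L) = C_ρ(V₀, ℝ)`. -/
theorem pushforward_readout_separation_constrained_universality
    {G : Type} [Group G] [Fintype G]
    {d : ℕ} {Y : Fin (d + 2) → Type} [∀ i, Fintype (Y i)] [∀ i, MulAction G (Y i)]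
    (M : ∀ i : Fin (d + 1), Set ((Y i.castSucc → ℝ) → (Y i.succ → ℝ)))
    (hM : ∀ i, IsLayerSpace G (M i))
    (x : Y (Fin.last (d + 1)))
    (Mlast : Set ((Y (Fin.last (d + 1)) → ℝ) → (Y (Fin.last (d + 1)) → ℝ)))
    (hMlast : IsLayerSpace G Mlast) (hid : (fun v => v) ∈ Mlast)
    (σ : ℝ → ℝ) (hσc : Continuous σ) (hσp : NotPolynomial σ) :
    UClassApp2 σ d Y M
        ((fun (m : (Y (Fin.last (d + 1)) → ℝ) → (Y (Fin.last (d + 1)) → ℝ)) =>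
            fun v (_ : Unit) => m v x) '' Mlast) Lfull
      = Crho (sepRel (UClassApp1 σ d Y M
          ((fun (m : (Y (Fin.last (d + 1)) → ℝ) → (Y (Fin.last (d + 1)) → ℝ)) =>
              fun v (_ : Unit) => m v x) '' Mlast))) :=
  pushforward_readout_separation_constrained_universality_general M
    (fun i => (hM i).isHiddenLayer) _ (hMlast.isReadoutLayer.image_coordinate x) σ hσc hσp
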